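/- arXiv:2003.05572 — 2 statements merged into one kernel-verified Lean document; each statement's English description precedes it below -/
import Mathlib

section
/- For every x ∈ ℝⁿ and ε > 0, the function t ↦ t^{n/2} w_ε(x,t) is strictly monotone increasing on (0,+∞); equivalently, t ↦ S_ε(x,t) − (nε/2) ln t is strictly monotone decreasing on (0,+∞). -/
open scoped Topology
open Filter MeasureTheory

/-- The integrand `exp(−(‖x−y‖²/(2t) + J(y))/ε)`, with the convention `exp(−∞) = 0`. -/
noncomputable def heatIntegrand (n : ℕ) (J : EuclideanSpace ℝ (Fin n) → EReal)
    (x : EuclideanSpace ℝ (Fin n)) (t ε : ℝ) (y : EuclideanSpace ℝ (Fin n)) : ℝ :=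
  if J y = ⊤ then 0 else Real.exp (-((‖x - y‖ ^ 2 / (2 * t) + (J y).toReal) / ε))

/-- `w_ε(x,t) = (2πtε)^{−n/2} ∫ exp(−(‖x−y‖²/(2t) + J(y))/ε) dy`. -/
noncomputable def heatSol (n : ℕ) (J : EuclideanSpace ℝ (Fin n) → EReal)
    (x : EuclideanSpace ℝ (Fin n)) (t ε : ℝ) : ℝ :=
  (2 * Real.pi * t * ε) ^ (-(n : ℝ) / 2) * ∫ y, heatIntegrand n J x t ε y

/-- `S_ε(x,t) = −ε ln w_ε(x,t)`. -/
noncomputable def viscSol (n : ℕ) (J : EuclideanSpace ℝ (Fin n) → EReal)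
    (x : EuclideanSpace ℝ (Fin n)) (t ε : ℝ) : ℝ :=
  -ε * Real.log (heatSol n J x t ε)

lemma heat_integrable (n : ℕ)
    (J : EuclideanSpace ℝ (Fin n) → EReal)
    (hJ_lsc : LowerSemicontinuous J) (h0 : ∀ y, 0 ≤ J y)
    (x : EuclideanSpace ℝ (Fin n)) (ε : ℝ) (hε : 0 < ε) (t : ℝ) (ht : 0 < t) :
    Integrable (heatIntegrand n J x t ε) := by
  have hb : 0 < 1 / (2 * t * ε) := by positivity
  have hg : Integrable (fun y : EuclideanSpace ℝ (Fin n) =>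
      Real.exp (-(1 / (2 * t * ε)) * ‖y‖ ^ 2)) := by
    have h := (GaussianFourier.integrable_cexp_neg_mul_sq_norm_add (V := EuclideanSpace ℝ (Fin n))
      (b := ((1 / (2 * t * ε) : ℝ) : ℂ)) (by simpa using hb) 0 0).norm
    refine h.congr (Eventually.of_forall fun y => ?_)
    simp only [Complex.norm_exp, zero_mul, add_zero]
    congr 1
    rw [← Complex.ofReal_neg, ← Complex.ofReal_pow, ← Complex.ofReal_mul, Complex.ofReal_re]
  have hg2 := hg.comp_sub_left x
  have hJm : Measurable J := hJ_lsc.measurable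
  refine hg2.mono' ?_ (Eventually.of_forall fun y => ?_)
  · apply Measurable.aestronglyMeasurable
    unfold heatIntegrand
    refine Measurable.ite (hJm (measurableSet_singleton _)) measurable_const ?_
    have := hJm.ereal_toReal
    fun_prop
  · unfold heatIntegrand
    split_ifs with h
    · simp; positivity
    · rw [Real.norm_eq_abs, abs_of_pos (Real.exp_pos _), Real.exp_le_exp]
      have h1 : 0 ≤ (J y).toReal := EReal.toReal_nonneg (h0 y)
      have h2 : -(1 / (2 * t * ε)) * ‖x - y‖ ^ 2 = -((‖x - y‖ ^ 2 / (2 * t) + 0) / ε) := by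
        field_simp
        ring
      rw [h2]
      gcongr

lemma heat_integral_lt (n : ℕ) (hn : 1 ≤ n)
    (J : EuclideanSpace ℝ (Fin n) → EReal)
    (hJ_lsc : LowerSemicontinuous J) (h0 : ∀ y, 0 ≤ J y)
    (hJ_int : (interior {y : EuclideanSpace ℝ (Fin n) | J y ≠ ⊤}).Nonempty)
    (x : EuclideanSpace ℝ (Fin n)) (ε : ℝ) (hε : 0 < ε) (s t : ℝ) (hs : 0 < s) (hst : s < t) :
    ∫ y, heatIntegrand n J x s ε y < ∫ y, heatIntegrand n J x t ε y := by
  have ht := hs.trans hst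
  have is := heat_integrable n J hJ_lsc h0 x ε hε s hs
  have it := heat_integrable n J hJ_lsc h0 x ε hε t ht
  rw [← sub_pos, ← integral_sub' it is]
  have : Nonempty (Fin n) := ⟨⟨0, hn⟩⟩
  rw [integral_pos_iff_support_of_nonneg _ (it.sub is)]
  · have hpos : 0 < volume (interior {y : EuclideanSpace ℝ (Fin n) | J y ≠ ⊤} \ {x}) := by
      rw [measure_diff_null (measure_singleton x)]
      exact isOpen_interior.measure_pos _ hJ_int
    refine hpos.trans_le (measure_mono ?_)
    rintro y ⟨hy, hyx⟩
    have hy' : J y ≠ ⊤ := interior_subset hy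
    have hn' : 0 < ‖x - y‖ := norm_pos_iff.2 (sub_ne_zero.2 (fun h => hyx (by simp [h])))
    simp only [Function.mem_support, Pi.sub_apply, heatIntegrand, if_neg hy']
    apply ne_of_gt
    rw [sub_pos, Real.exp_lt_exp]
    gcongr
  · intro y
    simp only [heatIntegrand, Pi.zero_apply, Pi.sub_apply]
    split_ifs with h
    · simp
    · rw [sub_nonneg, Real.exp_le_exp]
      gcongr

lemma heat_integral_pos (n : ℕ)
    (J : EuclideanSpace ℝ (Fin n) → EReal)
    (hJ_lsc : LowerSemicontinuous J) (h0 : ∀ y, 0 ≤ J y)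
    (hJ_int : (interior {y : EuclideanSpace ℝ (Fin n) | J y ≠ ⊤}).Nonempty)
    (x : EuclideanSpace ℝ (Fin n)) (ε : ℝ) (hε : 0 < ε) (t : ℝ) (ht : 0 < t) :
    0 < ∫ y, heatIntegrand n J x t ε y := by
  rw [integral_pos_iff_support_of_nonneg _ (heat_integrable n J hJ_lsc h0 x ε hε t ht)]
  · refine (isOpen_interior.measure_pos volume hJ_int).trans_le (measure_mono ?_)
    intro y hy
    have hy' : J y ≠ ⊤ := interior_subset hy
    simp only [Function.mem_support, Pi.sub_apply, heatIntegrand, if_neg hy']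
    exact (Real.exp_pos _).ne'
  · intro y
    simp only [heatIntegrand, Pi.zero_apply, Pi.sub_apply]
    split_ifs with h
    · simp
    · positivity

/-- For every `x` and `ε > 0`, the function `t ↦ t^{n/2} w_ε(x,t)` is strictly monotone
increasing on `(0,∞)`; equivalently, `t ↦ S_ε(x,t) − (nε/2) ln t` is strictly monotone
decreasing on `(0,∞)`. -/
theorem heatSol_strictMono_in_time (n : ℕ) (hn : 1 ≤ n)
    (J : EuclideanSpace ℝ (Fin n) → EReal)
    (hJ_proper_bot : ∀ y, J y ≠ ⊥)
    (hJ_lsc : LowerSemicontinuous J)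
    (hJ_convex : ∀ y₁ y₂ : EuclideanSpace ℝ (Fin n), ∀ a b : ℝ, 0 ≤ a → 0 ≤ b → a + b = 1 →
      J (a • y₁ + b • y₂) ≤ (a : EReal) * J y₁ + (b : EReal) * J y₂)
    (hJ_int : (interior {y : EuclideanSpace ℝ (Fin n) | J y ≠ ⊤}).Nonempty)
    (hJ_inf : (⨅ y : EuclideanSpace ℝ (Fin n), J y) = (0 : EReal))
    (x : EuclideanSpace ℝ (Fin n)) (ε : ℝ) (hε : 0 < ε) :
    StrictMonoOn (fun t : ℝ => t ^ ((n : ℝ) / 2) * heatSol n J x t ε) (Set.Ioi 0) ∧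
    StrictAntiOn (fun t : ℝ => viscSol n J x t ε - n * ε / 2 * Real.log t) (Set.Ioi 0) := by
  have h0 : ∀ y, 0 ≤ J y := fun y => hJ_inf ▸ iInf_le J y
  have key : ∀ t : ℝ, 0 < t → t ^ ((n : ℝ) / 2) * heatSol n J x t ε =
      (2 * Real.pi * ε) ^ (-(n : ℝ) / 2) * ∫ y, heatIntegrand n J x t ε y := by
    intro t ht
    have hpi := Real.pi_pos
    unfold heatSol
    rw [show 2 * Real.pi * t * ε = t * (2 * Real.pi * ε) by ring,
      Real.mul_rpow ht.le (by positivity), ← mul_assoc, ← mul_assoc, ← Real.rpow_add ht,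
      show (n : ℝ) / 2 + -(n : ℝ) / 2 = 0 by ring, Real.rpow_zero, one_mul]
  have hc : 0 < (2 * Real.pi * ε) ^ (-(n : ℝ) / 2) := by
    have hpi := Real.pi_pos
    positivity
  have hmono : StrictMonoOn (fun t : ℝ => t ^ ((n : ℝ) / 2) * heatSol n J x t ε) (Set.Ioi 0) := by
    intro s hs t ht hst
    simp only
    rw [key s hs, key t ht]
    exact mul_lt_mul_of_pos_left (heat_integral_lt n hn J hJ_lsc h0 hJ_int x ε hε s t hs hst) hc
  have hpos : ∀ t : ℝ, 0 < t → 0 < t ^ ((n : ℝ) / 2) * heatSol n J x t ε := by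
    intro t ht
    rw [key t ht]
    exact mul_pos hc (heat_integral_pos n J hJ_lsc h0 hJ_int x ε hε t ht)
  have hlog : ∀ t : ℝ, 0 < t → viscSol n J x t ε - n * ε / 2 * Real.log t =
      -(ε * Real.log (t ^ ((n : ℝ) / 2) * heatSol n J x t ε)) := by
    intro t ht
    have h1 : 0 < t ^ ((n : ℝ) / 2) := Real.rpow_pos_of_pos ht _
    have h2 : heatSol n J x t ε ≠ 0 := (pos_of_mul_pos_right (hpos t ht) h1.le).ne'
    rw [Real.log_mul h1.ne' h2, Real.log_rpow ht]
    unfold viscSol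
    ring
  refine ⟨hmono, ?_⟩
  intro s hs t ht hst
  simp only
  rw [hlog s hs, hlog t ht]
  exact neg_lt_neg (mul_lt_mul_of_pos_left (Real.log_lt_log (hpos s hs) (hmono hs ht hst)) hε)
end

section
/- Suppose in addition that J is strongly convex with parameter m ≥ 0 (the case m = 0 being plain convexity). Then for every x ∈ ℝⁿ, t > 0 and ε > 0, the posterior mean squared error satisfies the optimal bound E_J[‖y − u_PM(x,t,ε)‖²] ≤ ntε/(1 + mt). -/
open scoped Topology
open Filter MeasureTheory

/-- The partition function `Z_J(x,t,ε) = ∫ exp(−(‖x−y‖²/(2t) + J(y))/ε) dy`. -/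
noncomputable def partitionFn (n : ℕ) (J : EuclideanSpace ℝ (Fin n) → EReal)
    (x : EuclideanSpace ℝ (Fin n)) (t ε : ℝ) : ℝ :=
  ∫ y, heatIntegrand n J x t ε y

/-- The posterior mean estimate `u_PM(x,t,ε) = E_J[y]`. -/
noncomputable def postMean (n : ℕ) (J : EuclideanSpace ℝ (Fin n) → EReal)
    (x : EuclideanSpace ℝ (Fin n)) (t ε : ℝ) : EuclideanSpace ℝ (Fin n) :=
  (partitionFn n J x t ε)⁻¹ • ∫ y, heatIntegrand n J x t ε y • y

lemma aux_integrable {E : Type*} [NormedAddCommGroup E] [InnerProductSpace ℝ E]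
    [FiniteDimensional ℝ E] [MeasurableSpace E] [BorelSpace E] (c : E) (b : ℝ) (hb : 0 < b) :
    Integrable (fun y : E => Real.exp (-b * ‖y - c‖ ^ 2)) := by
  have h := GaussianFourier.integrable_cexp_neg_mul_sq_norm_add (V := E) (b := (b : ℂ))
    (by simpa using hb) 0 0
  have h2 := h.norm
  have h3 : Integrable (fun y : E => Real.exp (-b * ‖y‖ ^ 2)) := by
    refine h2.congr (Eventually.of_forall fun y => ?_)
    simp only [Complex.norm_exp]
    congr 1
    simp [← Complex.ofReal_pow]
  exact h3.comp_sub_right c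

/-- Main estimate: second moment around the minimiser of a strongly convex potential. -/
lemma aux_main (n : ℕ) (D : Set (EuclideanSpace ℝ (Fin n))) (V : EuclideanSpace ℝ (Fin n) → ℝ)
    (f : EuclideanSpace ℝ (Fin n) → ℝ) (hfm : Measurable f)
    (hfD : ∀ y ∈ D, f y = Real.exp (-V y)) (hfn : ∀ y, y ∉ D → f y = 0)
    (κ : ℝ) (hκ : 0 < κ) (c : EuclideanSpace ℝ (Fin n))
    (hmin : ∀ y ∈ D, V c ≤ V y)
    (hconv : ∀ y ∈ D, ∀ a b : ℝ, 0 ≤ a → 0 ≤ b → a + b = 1 → a • c + b • y ∈ D ∧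
      V (a • c + b • y) ≤ a * V c + b * V y - κ / 2 * a * b * ‖y - c‖ ^ 2) :
    Integrable f ∧ Integrable (fun y => f y * ‖y - c‖ ^ 2) ∧
      κ * ∫ y, f y * ‖y - c‖ ^ 2 ≤ n * ∫ y, f y := by
  have hf0 : ∀ y, 0 ≤ f y := by
    intro y
    by_cases hy : y ∈ D
    · rw [hfD y hy]; positivity
    · rw [hfn y hy]
  -- quadratic growth
  have hgrow : ∀ y ∈ D, V c + κ / 2 * ‖y - c‖ ^ 2 ≤ V y := by
    intro y hy
    have key : ∀ a ∈ Set.Ioo (0 : ℝ) 1, V c + κ / 2 * a * ‖y - c‖ ^ 2 ≤ V y := by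
      intro a ha
      obtain ⟨h1, h2⟩ := hconv y hy a (1 - a) ha.1.le (by linarith [ha.2]) (by ring)
      have h3 := hmin _ h1
      have h4 : 0 < 1 - a := by linarith [ha.2]
      have h5 : 0 ≤ (1 - a) * (V y - (V c + κ / 2 * a * ‖y - c‖ ^ 2)) := by nlinarith
      have := nonneg_of_mul_nonneg_right h5 h4
      linarith
    have hcont : Tendsto (fun a : ℝ => V c + κ / 2 * a * ‖y - c‖ ^ 2) (𝓝[<] 1)
        (𝓝 (V c + κ / 2 * 1 * ‖y - c‖ ^ 2)) := by
      apply Tendsto.mono_left _ nhdsWithin_le_nhds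
      apply Continuous.tendsto (f := fun a : ℝ => V c + κ / 2 * a * ‖y - c‖ ^ 2)
      fun_prop
    have := le_of_tendsto hcont (by
      filter_upwards [Ioo_mem_nhdsLT (zero_lt_one' ℝ)] with a ha using key a ha)
    simpa using this
  have hfb : ∀ y, f y ≤ Real.exp (-V c) * Real.exp (-(κ / 2) * ‖y - c‖ ^ 2) := by
    intro y
    by_cases hy : y ∈ D
    · rw [hfD y hy, ← Real.exp_add]
      apply Real.exp_le_exp.2
      linarith [hgrow y hy]
    · rw [hfn y hy]; positivity
  have hfi : Integrable f := by
    refine ((aux_integrable c (κ / 2) (by positivity)).const_mul (Real.exp (-V c))).mono'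
      hfm.aestronglyMeasurable (Eventually.of_forall fun y => ?_)
    rw [Real.norm_of_nonneg (hf0 y)]
    exact hfb y
  have hfdi : Integrable (fun y => f y * ‖y - c‖ ^ 2) := by
    refine ((aux_integrable c (κ / 4) (by positivity)).const_mul
      (Real.exp (-V c) * (4 / κ))).mono'
      (hfm.mul (by fun_prop)).aestronglyMeasurable (Eventually.of_forall fun y => ?_)
    rw [Real.norm_of_nonneg (mul_nonneg (hf0 y) (by positivity))]
    have h1 : ‖y - c‖ ^ 2 ≤ 4 / κ * Real.exp (κ / 4 * ‖y - c‖ ^ 2) := by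
      have := Real.add_one_le_exp (κ / 4 * ‖y - c‖ ^ 2)
      have h2 : κ / 4 * ‖y - c‖ ^ 2 ≤ Real.exp (κ / 4 * ‖y - c‖ ^ 2) := by linarith
      calc ‖y - c‖ ^ 2 = 4 / κ * (κ / 4 * ‖y - c‖ ^ 2) := by field_simp
        _ ≤ _ := by gcongr
    calc f y * ‖y - c‖ ^ 2 ≤ (Real.exp (-V c) * Real.exp (-(κ / 2) * ‖y - c‖ ^ 2)) *
          (4 / κ * Real.exp (κ / 4 * ‖y - c‖ ^ 2)) := by
          apply mul_le_mul (hfb y) h1 (by positivity) (by positivity)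
      _ = Real.exp (-V c) * (4 / κ) *
          (Real.exp (-(κ / 2) * ‖y - c‖ ^ 2) * Real.exp (κ / 4 * ‖y - c‖ ^ 2)) := by ring
      _ = _ := by rw [← Real.exp_add]; congr 2; ring
  refine ⟨hfi, hfdi, ?_⟩
  set Z := ∫ y, f y with hZ
  set I := ∫ y, f y * ‖y - c‖ ^ 2 with hI
  have step : ∀ s ∈ Set.Ioo (0 : ℝ) 1,
      s ^ n * (1 + s) * (κ / 2 * I) ≤ (∑ i ∈ Finset.range n, s ^ i) * Z := by
    intro s hs
    have hs0 := hs.1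
    have h1s : 0 < 1 - s := by linarith [hs.2]
    have hpt : ∀ y, f y + (1 - s) * (1 + s) * (κ / 2) * (f y * ‖y - c‖ ^ 2)
        ≤ f (s • y + (1 - s) • c) := by
      intro y
      by_cases hy : y ∈ D
      · obtain ⟨h1, h2⟩ := hconv y hy (1 - s) s h1s.le hs0.le (by ring)
        rw [add_comm] at h1 h2
        rw [hfD _ h1, hfD y hy]
        set q := (1 - s) * (1 + s) * (κ / 2) * ‖y - c‖ ^ 2 with hq
        calc Real.exp (-V y) + (1 - s) * (1 + s) * (κ / 2) * (Real.exp (-V y) * ‖y - c‖ ^ 2)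
            = Real.exp (-V y) * (q + 1) := by rw [hq]; ring
          _ ≤ Real.exp (-V y) * Real.exp q := by
            gcongr
            exact Real.add_one_le_exp q
          _ = Real.exp (-V y + q) := by rw [Real.exp_add]
          _ ≤ _ := by
            apply Real.exp_le_exp.2
            have := mul_le_mul_of_nonneg_left (hgrow y hy) h1s.le
            rw [hq]
            nlinarith
      · rw [hfn y hy]; simp only [zero_mul, mul_zero, add_zero]; exact hf0 _
    have hsc : Integrable (fun y => f (s • y + (1 - s) • c)) :=
      (hfi.comp_add_right ((1 - s) • c)).comp_smul hs0.ne'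
    have hval : ∫ y, f (s • y + (1 - s) • c) = (s ^ n)⁻¹ * Z := by
      rw [Measure.integral_comp_smul volume (fun y => f (y + (1 - s) • c)) s,
        integral_add_right_eq_self f]
      simp only [finrank_euclideanSpace, Fintype.card_fin, smul_eq_mul]
      rw [abs_of_nonneg (by positivity)]
    have hle := integral_mono (hfi.add (hfdi.const_mul ((1 - s) * (1 + s) * (κ / 2)))) hsc hpt
    simp only [Pi.add_apply] at hle
    rw [hval, integral_add hfi (hfdi.const_mul _), integral_const_mul, ← hZ, ← hI] at hle
    have hle2 : s ^ n * (Z + (1 - s) * (1 + s) * (κ / 2) * I) ≤ Z := by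
      have := mul_le_mul_of_nonneg_left hle (by positivity : 0 ≤ s ^ n)
      rwa [mul_inv_cancel_left₀ (by positivity)] at this
    have hg := mul_neg_geom_sum s n
    have : 0 ≤ (1 - s) * ((∑ i ∈ Finset.range n, s ^ i) * Z - s ^ n * (1 + s) * (κ / 2 * I)) := by
      have e : (1 - s) * ((∑ i ∈ Finset.range n, s ^ i) * Z - s ^ n * (1 + s) * (κ / 2 * I))
        = (1 - s ^ n) * Z - s ^ n * ((1 - s) * (1 + s) * (κ / 2) * I) := by
        rw [← hg]; ring
      rw [e]; linarith
    have := nonneg_of_mul_nonneg_right this h1s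
    linarith
  have t1 : Tendsto (fun s : ℝ => s ^ n * (1 + s) * (κ / 2 * I)) (𝓝[<] 1)
      (𝓝 (1 ^ n * (1 + 1) * (κ / 2 * I))) := by
    apply Tendsto.mono_left _ nhdsWithin_le_nhds
    apply Continuous.tendsto (f := fun s : ℝ => s ^ n * (1 + s) * (κ / 2 * I))
    fun_prop
  have t2 : Tendsto (fun s : ℝ => (∑ i ∈ Finset.range n, s ^ i) * Z) (𝓝[<] 1)
      (𝓝 ((∑ i ∈ Finset.range n, (1 : ℝ) ^ i) * Z)) := by
    apply Tendsto.mono_left _ nhdsWithin_le_nhds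
    apply Continuous.tendsto (f := fun s : ℝ => (∑ i ∈ Finset.range n, s ^ i) * Z)
    fun_prop
  have := le_of_tendsto_of_tendsto t1 t2 (by
    filter_upwards [Ioo_mem_nhdsLT (zero_lt_one' ℝ)] with a ha using step a ha)
  simp only [one_pow, Finset.sum_const, Finset.card_range, nsmul_eq_mul, mul_one] at this
  linarith

/-- The mean minimises the second moment. -/
lemma aux_mean (n : ℕ) (f : EuclideanSpace ℝ (Fin n) → ℝ) (c : EuclideanSpace ℝ (Fin n))
    (hfm : Measurable f) (hf0 : ∀ y, 0 ≤ f y) (hfi : Integrable f)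
    (hfdi : Integrable (fun y => f y * ‖y - c‖ ^ 2)) (hZ : ∫ y, f y ≠ 0) :
    ∫ y, f y * ‖y - (∫ y, f y)⁻¹ • ∫ y, f y • y‖ ^ 2 ≤ ∫ y, f y * ‖y - c‖ ^ 2 := by
  set Z := ∫ y, f y with hZd
  have hv : Integrable (fun y => f y • (y - c)) := by
    refine (hfi.add hfdi).mono' (hfm.aestronglyMeasurable.smul (by fun_prop))
      (Eventually.of_forall fun y => ?_)
    simp only [norm_smul, Real.norm_of_nonneg (hf0 y), Pi.add_apply]
    have : ‖y - c‖ ≤ 1 + ‖y - c‖ ^ 2 := by nlinarith [sq_nonneg (‖y - c‖ - 1)]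
    nlinarith [mul_le_mul_of_nonneg_left this (hf0 y)]
  have hM : ∫ y, f y • y = (∫ y, f y • (y - c)) + Z • c := by
    rw [hZd, ← integral_smul_const, ← integral_add hv (hfi.smul_const c)]
    congr 1; ext1 y; rw [smul_sub]; abel
  set M := ∫ y, f y • (y - c) with hMd
  have hu : Z⁻¹ • ∫ y, f y • y = c + Z⁻¹ • M := by
    rw [hM, smul_add, smul_smul, inv_mul_cancel₀ hZ, one_smul, add_comm]
  rw [hu]
  obtain ⟨w, hw⟩ : ∃ w, w = Z⁻¹ • M := ⟨_, rfl⟩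
  rw [← hw]
  have hMw : M = Z • w := by rw [hw, smul_smul, mul_inv_cancel₀ hZ, one_smul]
  have hexp : ∀ y, f y * ‖y - (c + w)‖ ^ 2 =
      f y * ‖y - c‖ ^ 2 + (f y * ‖w‖ ^ 2 - 2 * inner ℝ w (f y • (y - c))) := by
    intro y
    rw [← sub_sub, norm_sub_sq_real, inner_smul_right w (y - c) (f y), real_inner_comm w (y - c)]; ring
  have hin : Integrable (fun y => inner ℝ w (f y • (y - c))) := hv.const_inner w
  have hin2 : Integrable (fun y => f y * ‖w‖ ^ 2 - 2 * inner ℝ w (f y • (y - c))) :=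
    (hfi.mul_const _).sub (hin.const_mul 2)
  simp only [hexp]
  rw [integral_add hfdi hin2,
    integral_sub (hfi.mul_const _) (hin.const_mul 2), integral_mul_const, integral_const_mul,
    integral_inner hv, ← hMd, hMw, inner_smul_right, real_inner_self_eq_norm_sq, ← hZd]
  have : 0 ≤ Z := integral_nonneg hf0
  nlinarith [mul_nonneg this (sq_nonneg ‖w‖)]

lemma aux_norm (n : ℕ) (x y z : EuclideanSpace ℝ (Fin n)) (a b : ℝ) (hab : a + b = 1) :
    ‖x - (a • y + b • z)‖ ^ 2 = a * ‖x - y‖ ^ 2 + b * ‖x - z‖ ^ 2 - a * b * ‖y - z‖ ^ 2 := by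
  have e : x - (a • y + b • z) = a • (x - y) + b • (x - z) := by
    have : x = (a + b) • x := by rw [hab, one_smul]
    nth_rewrite 1 [this]
    module
  have e2 : y - z = (x - z) - (x - y) := by abel
  rw [e, e2, norm_add_sq_real, norm_sub_sq_real (x - z) (x - y), norm_smul, norm_smul, mul_pow, mul_pow,
    inner_smul_left, inner_smul_right, real_inner_comm (x - y) (x - z)]
  simp only [Real.norm_eq_abs, sq_abs, conj_trivial]
  obtain rfl : b = 1 - a := by linarith
  ring

/-- If `J` is strongly convex with parameter `m ≥ 0` (the case `m = 0` being plain
convexity), then for every `x`, `t > 0` and `ε > 0`, the posterior mean squared error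
satisfies the optimal bound `E_J[‖y − u_PM(x,t,ε)‖²] ≤ ntε/(1 + mt)`. -/
theorem postVariance_optimal_bound (n : ℕ) (hn : 1 ≤ n)
    (J : EuclideanSpace ℝ (Fin n) → EReal)
    (hJ_proper_bot : ∀ y, J y ≠ ⊥)
    (hJ_lsc : LowerSemicontinuous J)
    (hJ_int : (interior {y : EuclideanSpace ℝ (Fin n) | J y ≠ ⊤}).Nonempty)
    (hJ_inf : (⨅ y : EuclideanSpace ℝ (Fin n), J y) = (0 : EReal))
    (m : ℝ) (hm : 0 ≤ m)
    (hJ_strconv : ∀ y₁ y₂ : EuclideanSpace ℝ (Fin n), ∀ a b : ℝ, 0 ≤ a → 0 ≤ b → a + b = 1 →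
      J (a • y₁ + b • y₂)
        ≤ (a : EReal) * J y₁ + (b : EReal) * J y₂
            - (((m / 2 * a * b * ‖y₁ - y₂‖ ^ 2 : ℝ)) : EReal))
    (x : EuclideanSpace ℝ (Fin n)) (t ε : ℝ) (ht : 0 < t) (hε : 0 < ε) :
    (partitionFn n J x t ε)⁻¹
        * ∫ y, heatIntegrand n J x t ε y * ‖y - postMean n J x t ε‖ ^ 2
      ≤ n * t * ε / (1 + m * t) := by
  have hJ0 : ∀ y, 0 ≤ J y := fun y => hJ_inf ▸ iInf_le J y
  have hcoe : ∀ y, J y ≠ ⊤ → (((J y).toReal : ℝ) : EReal) = J y :=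
    fun y hy => EReal.coe_toReal hy (hJ_proper_bot y)
  have hJr0 : ∀ y, 0 ≤ (J y).toReal := fun y => EReal.toReal_nonneg (hJ0 y)
  set D : Set (EuclideanSpace ℝ (Fin n)) := {y | J y ≠ ⊤} with hD
  set V : EuclideanSpace ℝ (Fin n) → ℝ :=
    fun y => (‖x - y‖ ^ 2 / (2 * t) + (J y).toReal) / ε with hV
  set f := heatIntegrand n J x t ε with hf
  have hJm : Measurable J := hJ_lsc.measurable
  have hfm : Measurable f := by
    apply Measurable.ite (hJm (measurableSet_singleton ⊤)) measurable_const
    apply Real.measurable_exp.comp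
    have := hJm.ereal_toReal
    fun_prop
  have hfD : ∀ y ∈ D, f y = Real.exp (-V y) := by
    intro y hy
    have : J y ≠ ⊤ := hy
    simp [hf, heatIntegrand, this, hV]
  have hfn : ∀ y, y ∉ D → f y = 0 := by
    intro y hy
    have : J y = ⊤ := by simpa [hD] using hy
    simp [hf, heatIntegrand, this]
  set κ := (1 / t + m) / ε with hκd
  have hκ : 0 < κ := by positivity
  have hconvJ : ∀ y ∈ D, ∀ z ∈ D, ∀ a b : ℝ, 0 ≤ a → 0 ≤ b → a + b = 1 → a • y + b • z ∈ D ∧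
      (J (a • y + b • z)).toReal ≤ a * (J y).toReal + b * (J z).toReal
        - m / 2 * a * b * ‖y - z‖ ^ 2 := by
    intro y hy z hz a b ha hb hab
    have h := hJ_strconv y z a b ha hb hab
    rw [← hcoe y hy, ← hcoe z hz] at h
    rw [← EReal.coe_mul, ← EReal.coe_mul, ← EReal.coe_add, ← EReal.coe_sub] at h
    have hne : J (a • y + b • z) ≠ ⊤ := fun h' => by
      rw [h'] at h; exact absurd (top_le_iff.1 h) (EReal.coe_ne_top _)
    refine ⟨hne, ?_⟩
    rw [← hcoe _ hne] at h
    exact EReal.coe_le_coe_iff.1 h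
  have hmin : ∃ c ∈ D, ∀ y ∈ D, V c ≤ V y := by
    obtain ⟨y0, hy0⟩ := hJ_int
    have hy0 : J y0 ≠ ⊤ := interior_subset hy0
    set R := ‖x - y0‖ ^ 2 + 2 * t * (J y0).toReal with hR
    have hR0 : 0 ≤ R := by have := hJr0 y0; positivity
    set W : EuclideanSpace ℝ (Fin n) → EReal :=
      fun y => ((‖x - y‖ ^ 2 / (2 * t) : ℝ) : EReal) + J y with hW
    have hWl : LowerSemicontinuous W := by
      apply LowerSemicontinuous.add'
      · apply Continuous.lowerSemicontinuous
        exact continuous_coe_real_ereal.comp (by fun_prop)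
      · exact hJ_lsc
      · intro y
        exact EReal.continuousAt_add (Or.inl (EReal.coe_ne_top _)) (Or.inl (EReal.coe_ne_bot _))
    have hy0K : y0 ∈ Metric.closedBall x (Real.sqrt R) := by
      rw [Metric.mem_closedBall, dist_comm, dist_eq_norm]
      apply Real.le_sqrt_of_sq_le
      have := hJr0 y0
      have : 0 ≤ 2 * t * (J y0).toReal := by positivity
      linarith
    obtain ⟨c, hcK, hc⟩ := (hWl.lowerSemicontinuousOn _).exists_isMinOn ⟨y0, hy0K⟩
      (isCompact_closedBall x (Real.sqrt R))
    have hWD : ∀ y ∈ D, W y = ((‖x - y‖ ^ 2 / (2 * t) + (J y).toReal : ℝ) : EReal) := by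
      intro y hy
      simp only [hW]
      rw [EReal.coe_add, hcoe y hy]
    have hcy0 : W c ≤ W y0 := hc hy0K
    have hcD : c ∈ D := by
      intro h
      rw [hWD y0 hy0] at hcy0
      simp only [hW, h, EReal.coe_add_top] at hcy0
      exact absurd (top_le_iff.1 hcy0) (EReal.coe_ne_top _)
    refine ⟨c, hcD, fun y hy => ?_⟩
    simp only [hV]
    apply div_le_div_of_nonneg_right _ hε.le
    rw [hWD c hcD, hWD y0 hy0, EReal.coe_le_coe_iff] at hcy0
    by_cases hyK : y ∈ Metric.closedBall x (Real.sqrt R)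
    · have h : W c ≤ W y := hc hyK
      rwa [hWD c hcD, hWD y hy, EReal.coe_le_coe_iff] at h
    · rw [Metric.mem_closedBall, dist_comm, dist_eq_norm, not_le] at hyK
      rw [Real.sqrt_lt' ((Real.sqrt_nonneg R).trans_lt hyK)] at hyK
      have h1 : ‖x - y0‖ ^ 2 / (2 * t) + (J y0).toReal = R / (2 * t) := by
        rw [hR]; field_simp
      have h2 : R / (2 * t) ≤ ‖x - y‖ ^ 2 / (2 * t) := by gcongr
      linarith [hJr0 y]
  obtain ⟨c, hcD, hmin⟩ := hmin
  have hconv : ∀ y ∈ D, ∀ a b : ℝ, 0 ≤ a → 0 ≤ b → a + b = 1 → a • c + b • y ∈ D ∧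
      V (a • c + b • y) ≤ a * V c + b * V y - κ / 2 * a * b * ‖y - c‖ ^ 2 := by
    intro y hy a b ha hb hab
    obtain ⟨h1, h2⟩ := hconvJ c hcD y hy a b ha hb hab
    refine ⟨h1, ?_⟩
    simp only [hV]
    rw [aux_norm n x c y a b hab]
    rw [norm_sub_rev y c]
    have e : a * ((‖x - c‖ ^ 2 / (2 * t) + (J c).toReal) / ε) +
        b * ((‖x - y‖ ^ 2 / (2 * t) + (J y).toReal) / ε) - κ / 2 * a * b * ‖c - y‖ ^ 2
        = ((a * ‖x - c‖ ^ 2 + b * ‖x - y‖ ^ 2 - a * b * ‖c - y‖ ^ 2) / (2 * t) +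
          (a * (J c).toReal + b * (J y).toReal - m / 2 * a * b * ‖c - y‖ ^ 2)) / ε := by
      rw [hκd]; field_simp; ring
    rw [e]
    gcongr
  obtain ⟨hfi, hfdi, hmain⟩ := aux_main n D V f hfm hfD hfn κ hκ c hmin hconv
  have hf0 : ∀ y, 0 ≤ f y := by
    intro y
    by_cases hy : y ∈ D
    · rw [hfD y hy]; positivity
    · rw [hfn y hy]
  have hrhs : (n : ℝ) * t * ε / (1 + m * t) = n / κ := by
    rw [hκd]; field_simp
  rw [hrhs]
  unfold postMean partitionFn
  rw [← hf]
  by_cases hZ : ∫ y, f y = 0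
  · rw [hZ]; simp only [inv_zero, zero_mul]; positivity
  have hZpos : 0 < ∫ y, f y := lt_of_le_of_ne (integral_nonneg hf0) (Ne.symm hZ)
  have hmean := aux_mean n f c hfm hf0 hfi hfdi hZ
  rw [inv_mul_le_iff₀ hZpos]
  refine hmean.trans ?_
  rw [mul_div_assoc', le_div_iff₀ hκ]
  linarith
end
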